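/- Let 0 < ε < 1/4. There exists N = N(ε) such that every graph G on n ≥ N vertices with spectral radius ρ(G) > √(⌊n²/4⌋) contains a cycle C_l for every integer l with 3 ≤ l ≤ (1/4 − ε)n. -/

import Mathlib

open SimpleGraph

noncomputable def specRad {V : Type*} [Fintype V] [DecidableEq V] (G : SimpleGraph V) : ℝ :=
  letI := Classical.decRel G.Adj
  have h : (G.adjMatrix ℝ).IsHermitian := by
    ext i j
    simp [Matrix.conjTranspose_apply, SimpleGraph.adjMatrix_apply, G.adj_comm i j]
  ⨆ i, h.eigenvalues i

/-!
A triangle comes from Nosal's argument: in a triangle-free graph the degree sum over the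
neighbourhood of any vertex is at most `n² / 4`, whereas it is at least `ρ²` at a vertex where an
eigenvector for `ρ` is largest in modulus.

For `l ≥ 4`, clean `G` along a Szemerédi partition. The resulting graph `G'` still has
`ρ(G') ≥ (1/2 - O(η)) n`; choose such a vertex `u` for `G'`. If `u` lies in no triangle of `G'`,
then about `n² / 4` edges of `G` join the neighbourhood of `u` to its complement, so `G` contains an
almost complete balanced bipartite graph; as `ρ(G) > √⌊n² / 4⌋` prevents it from being bipartite,
it has cycles of all required lengths of both parities. Otherwise the part of `u` lies in a triangle
of the reduced graph, and the degrees in its component also sum to at least `ρ(G')²`. A closed walk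
of the reduced graph which runs back and forth along all edges of that component, its parity
adjusted by the triangle, lifts greedily to a cycle of `G`.
-/

open Finset

section Spectral

section EdgeForm

variable {V : Type*} (G : SimpleGraph V) [DecidableRel G.Adj]

lemma isHermitian_adjMatrix : (G.adjMatrix ℝ).IsHermitian := by
  rw [Matrix.IsHermitian, Matrix.conjTranspose_eq_transpose_of_trivial]
  exact G.isSymm_adjMatrix

/-- The bilinear form of the adjacency matrix evaluated at `(x restricted to A, x restricted to B)`:
the sum of `x a * x b` over the adjacent pairs `(a, b)` in `A × B`. -/
def edgeForm (x : V → ℝ) (A B : Finset V) : ℝ :=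
  ∑ p ∈ G.interedges A B, x p.1 * x p.2

lemma edgeForm_eq_sum_mul_sum (x : V → ℝ) (A B : Finset V) :
    edgeForm G x A B = ∑ v ∈ A, x v * ∑ w ∈ B with G.Adj v w, x w := by
  simp only [edgeForm, interedges_def, sum_filter, sum_product, mul_sum, mul_ite, mul_zero]

variable {G}

lemma edgeForm_eq_add_sdiff {G' : SimpleGraph V} [DecidableRel G'.Adj] (hle : G' ≤ G)
    (x : V → ℝ) (A B : Finset V) :
    edgeForm G x A B = edgeForm G' x A B + edgeForm (G \ G') x A B := by
  simp only [edgeForm, interedges_def, sum_filter, ← sum_add_distrib]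
  refine sum_congr rfl fun p _ => ?_
  by_cases hG' : G'.Adj p.1 p.2
  · simp [hG', hle hG']
  · simp [hG']

lemma sq_sum_mul_le_card_mul {D : Finset (V × V)} {A B : Finset V} (hD : D ⊆ A ×ˢ B)
    (x : V → ℝ) :
    (∑ p ∈ D, x p.1 * x p.2) ^ 2 ≤ #D * ((∑ a ∈ A, x a ^ 2) * ∑ b ∈ B, x b ^ 2) :=
  calc (∑ p ∈ D, x p.1 * x p.2) ^ 2 ≤ #D * ∑ p ∈ D, (x p.1 * x p.2) ^ 2 :=
        sq_sum_le_card_mul_sum_sq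
    _ ≤ #D * ∑ p ∈ A ×ˢ B, (x p.1 * x p.2) ^ 2 := by gcongr
    _ = #D * ((∑ a ∈ A, x a ^ 2) * ∑ b ∈ B, x b ^ 2) := by
        simp only [mul_pow, sum_mul_sum, sum_product]

end EdgeForm

section Eigenvector

variable {V : Type*} [Fintype V] {G : SimpleGraph V} [DecidableRel G.Adj] {x : V → ℝ} {μ : ℝ}

lemma sum_sq_pos_of_ne_zero (hx : x ≠ 0) : 0 < ∑ v, x v ^ 2 := by
  obtain ⟨v, hv⟩ := Function.ne_iff.1 hx
  exact sum_pos' (fun _ _ => sq_nonneg _) ⟨v, mem_univ v, sq_pos_of_ne_zero hv⟩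

lemma sq_le_sum_degree_neighborFinset
    (hx : ∀ v, ∑ w ∈ G.neighborFinset v, x w = μ * x v) {u : V} (hu : x u ≠ 0)
    (hmax : ∀ v, |x v| ≤ |x u|) :
    μ ^ 2 ≤ ∑ v ∈ G.neighborFinset u, (G.degree v : ℝ) := by
  refine le_of_mul_le_mul_right ?_ (abs_pos.2 hu)
  calc μ ^ 2 * |x u| = |∑ v ∈ G.neighborFinset u, ∑ w ∈ G.neighborFinset v, x w| := by
        simp only [hx, ← mul_sum]
        rw [← mul_assoc, ← sq, abs_mul, abs_of_nonneg (sq_nonneg μ)]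
    _ ≤ ∑ v ∈ G.neighborFinset u, ∑ _w ∈ G.neighborFinset v, |x u| :=
        (abs_sum_le_sum_abs _ _).trans <| sum_le_sum fun v _ =>
          (abs_sum_le_sum_abs _ _).trans <| sum_le_sum fun w _ => hmax w
    _ = (∑ v ∈ G.neighborFinset u, (G.degree v : ℝ)) * |x u| := by
        simp [sum_mul]

lemma sq_mul_sq_le_degree_mul_sum_sq {v : V}
    (hx : ∑ w ∈ G.neighborFinset v, x w = μ * x v) {C : Finset V}
    (hC : G.neighborFinset v ⊆ C) :
    μ ^ 2 * x v ^ 2 ≤ G.degree v * ∑ w ∈ C, x w ^ 2 :=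
  calc μ ^ 2 * x v ^ 2 = (∑ w ∈ G.neighborFinset v, x w) ^ 2 := by rw [hx, mul_pow]
    _ ≤ G.degree v * ∑ w ∈ G.neighborFinset v, x w ^ 2 := sq_sum_le_card_mul_sum_sq
    _ ≤ G.degree v * ∑ w ∈ C, x w ^ 2 := by gcongr

lemma sq_mul_sum_sq_le_of_degree_le {d : ℝ}
    (hx : ∀ v, ∑ w ∈ G.neighborFinset v, x w = μ * x v) {S : Finset V}
    (hdeg : ∀ v ∈ S, (G.degree v : ℝ) ≤ d) :
    μ ^ 2 * ∑ v ∈ S, x v ^ 2 ≤ #S * d * ∑ v, x v ^ 2 := by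
  rw [mul_sum, mul_assoc, ← nsmul_eq_mul]
  refine sum_le_card_nsmul _ _ _ fun v hv =>
    (sq_mul_sq_le_degree_mul_sum_sq (hx v) (subset_univ _)).trans ?_
  gcongr
  exact hdeg v hv

lemma sq_le_sum_degree_of_closed
    (hx : ∀ v, ∑ w ∈ G.neighborFinset v, x w = μ * x v) {C : Finset V}
    (hC : ∀ v ∈ C, G.neighborFinset v ⊆ C) {u : V} (huC : u ∈ C) (hu : x u ≠ 0) :
    μ ^ 2 ≤ ∑ v ∈ C, (G.degree v : ℝ) := by
  have hpos : 0 < ∑ w ∈ C, x w ^ 2 :=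
    sum_pos' (fun _ _ => sq_nonneg _) ⟨u, huC, sq_pos_of_ne_zero hu⟩
  refine le_of_mul_le_mul_right ?_ hpos
  rw [mul_sum, sum_mul]
  exact sum_le_sum fun v hv => sq_mul_sq_le_degree_mul_sum_sq (hx v) (hC v hv)

lemma edgeForm_univ_right_eq_mul
    (hx : ∀ v, ∑ w ∈ G.neighborFinset v, x w = μ * x v) (A : Finset V) :
    edgeForm G x A univ = μ * ∑ v ∈ A, x v ^ 2 := by
  simp only [edgeForm_eq_sum_mul_sum, ← neighborFinset_eq_filter, hx, mul_sum]
  exact sum_congr rfl fun v _ => by ring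

end Eigenvector

variable {V : Type*} [Fintype V] [DecidableEq V]

lemma dotProduct_mulVec_le_iSup_eigenvalues {A : Matrix V V ℝ} (hA : A.IsHermitian) (x : V → ℝ) :
    x ⬝ᵥ A.mulVec x ≤ (⨆ i, hA.eigenvalues i) * (x ⬝ᵥ x) := by
  set y : EuclideanSpace ℝ V := WithLp.toLp 2 x
  set T := Matrix.toEuclideanLin A
  set b := hA.eigenvectorBasis
  have eigen (i : V) : inner ℝ (b i) (T y) = hA.eigenvalues i * inner ℝ (b i) y := by
    have hTb : T (b i) = hA.eigenvalues i • b i := by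
      rw [Matrix.toLpLin_apply, hA.mulVec_eigenvectorBasis]; rfl
    rw [← Matrix.isSymmetric_toEuclideanLin_iff.2 hA, hTb, inner_smul_left]
    simp
  calc x ⬝ᵥ A.mulVec x = inner ℝ y (T y) := by
        simp [PiLp.inner_apply, dotProduct, y, T, mul_comm]
    _ = ∑ i, hA.eigenvalues i * inner ℝ (b i) y ^ 2 := by
        rw [← b.sum_inner_mul_inner y (T y)]
        refine sum_congr rfl fun i _ => ?_
        rw [eigen, real_inner_comm]
        ring
    _ ≤ ∑ i, (⨆ i, hA.eigenvalues i) * inner ℝ (b i) y ^ 2 := by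
        gcongr with i
        exact le_ciSup (Set.finite_range _).bddAbove i
    _ = (⨆ i, hA.eigenvalues i) * inner ℝ y y := by
        rw [← mul_sum, ← b.sum_inner_mul_inner y y]
        congr! 2 with i
        rw [real_inner_comm, sq]
    _ = (⨆ i, hA.eigenvalues i) * (x ⬝ᵥ x) := by
        simp only [y, EuclideanSpace.inner_toLp_toLp, star_trivial]

variable (G : SimpleGraph V) [DecidableRel G.Adj]

lemma specRad_eq_iSup_eigenvalues :
    specRad G = ⨆ i, (isHermitian_adjMatrix G).eigenvalues i := by
  obtain rfl : ‹DecidableRel G.Adj› = Classical.decRel G.Adj := Subsingleton.elim _ _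
  rfl

lemma edgeForm_univ_le_specRad_mul (x : V → ℝ) :
    edgeForm G x univ univ ≤ specRad G * ∑ v, x v ^ 2 := by
  have h := dotProduct_mulVec_le_iSup_eigenvalues (isHermitian_adjMatrix G) x
  rw [← specRad_eq_iSup_eigenvalues] at h
  simpa only [edgeForm_eq_sum_mul_sum, dotProduct, adjMatrix_mulVec_apply, sq,
    neighborFinset_eq_filter] using h

lemma exists_specRad_eigenvector [Nonempty V] :
    ∃ x : V → ℝ, x ≠ 0 ∧ ∀ v, ∑ w ∈ G.neighborFinset v, x w = specRad G * x v := by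
  have hA := isHermitian_adjMatrix G
  obtain ⟨i, hi⟩ := exists_eq_ciSup_of_finite (f := hA.eigenvalues)
  refine ⟨hA.eigenvectorBasis i, fun h0 => ?_, fun v => ?_⟩
  · exact hA.eigenvectorBasis.orthonormal.ne_zero i (PiLp.ext fun j => congrFun h0 j)
  · rw [specRad_eq_iSup_eigenvalues, ← hi, ← adjMatrix_mulVec_apply, hA.mulVec_eigenvectorBasis]
    rfl

lemma exists_dominant_vertex [Nonempty V] :
    ∃ u, specRad G ^ 2 ≤ ∑ v ∈ G.neighborFinset u, (G.degree v : ℝ) ∧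
      ∀ C : Finset V, u ∈ C → (∀ v ∈ C, G.neighborFinset v ⊆ C) →
        specRad G ^ 2 ≤ ∑ v ∈ C, (G.degree v : ℝ) := by
  obtain ⟨x, hx0, hx⟩ := exists_specRad_eigenvector G
  obtain ⟨u, hmax⟩ := Finite.exists_max fun v => |x v|
  have hu : x u ≠ 0 := fun hu => hx0 <| funext fun v => by simpa [hu] using hmax v
  exact ⟨u, sq_le_sum_degree_neighborFinset hx hu hmax,
    fun C huC hC => sq_le_sum_degree_of_closed hx hC huC hu⟩

variable {G}

lemma specRad_le_add_sqrt_card_interedges_sdiff [Nonempty V] {G' : SimpleGraph V}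
    [DecidableRel G'.Adj] (hle : G' ≤ G) :
    specRad G ≤ specRad G' + √(#((G \ G').interedges univ univ) : ℝ) := by
  obtain ⟨x, hx0, hx⟩ := exists_specRad_eigenvector G
  have hpos := sum_sq_pos_of_ne_zero hx0
  refine le_of_mul_le_mul_right ?_ hpos
  have deleted_le : edgeForm (G \ G') x univ univ ≤
      √(#((G \ G').interedges univ univ) : ℝ) * ∑ v, x v ^ 2 := by
    refine le_of_sq_le_sq ?_ (by positivity)
    rw [mul_pow, Real.sq_sqrt (by positivity), sq (∑ v, x v ^ 2)]
    exact sq_sum_mul_le_card_mul (filter_subset _ _) x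
  rw [add_mul, ← edgeForm_univ_right_eq_mul hx, edgeForm_eq_add_sdiff hle]
  exact add_le_add (edgeForm_univ_le_specRad_mul G' x) deleted_le

end Spectral

lemma mul_le_sq_div_four {a b n : ℕ} (h : a + b ≤ n) : a * b ≤ n ^ 2 / 4 := by
  rw [Nat.le_div_iff_mul_le (by norm_num), mul_comm, ← mul_assoc]
  exact (four_mul_le_sq_add a b).trans (Nat.pow_le_pow_left h 2)

theorem exists_triangle_of_sqrt_lt_specRad {V : Type*} [Fintype V] [DecidableEq V] [Nonempty V]
    {G : SimpleGraph V} (h : √((Fintype.card V ^ 2 / 4 : ℕ) : ℝ) < specRad G) :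
    ∃ u v w, G.Adj u v ∧ G.Adj u w ∧ G.Adj v w := by
  classical
  obtain ⟨u, hu, -⟩ := exists_dominant_vertex G
  by_contra! triangle_free
  have degree_le (v : V) (hv : v ∈ G.neighborFinset u) :
      G.degree v ≤ #(G.neighborFinset u)ᶜ := by
    refine card_le_card fun w hw => ?_
    simp only [mem_compl, mem_neighborFinset] at hv hw ⊢
    exact fun huw => triangle_free u v w hv huw hw
  have walks_le : ∑ v ∈ G.neighborFinset u, G.degree v ≤ Fintype.card V ^ 2 / 4 :=
    (sum_le_card_nsmul _ _ _ degree_le).trans <|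
      mul_le_sq_div_four (card_add_card_compl (G.neighborFinset u)).le
  rw [Real.sqrt_lt' ((Real.sqrt_nonneg _).trans_lt h)] at h
  exact absurd h (not_lt.2 (hu.trans (mod_cast walks_le)))

section NearBipartite

section EdgeForm

variable {V : Type*} {G : SimpleGraph V} [DecidableRel G.Adj]

lemma edgeForm_comm (x : V → ℝ) (A B : Finset V) : edgeForm G x A B = edgeForm G x B A := by
  simp only [edgeForm, interedges_def, sum_filter, sum_product, sum_comm (s := A), G.adj_comm,
    mul_comm]

lemma edgeForm_eq_zero_of_isIndepSet {P : Finset V} (hP : G.IsIndepSet P) (x : V → ℝ) :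
    edgeForm G x P P = 0 := by
  refine sum_eq_zero fun p hp => ?_
  obtain ⟨hp₁, hp₂, hadj⟩ := (mem_interedges_iff G).1 hp
  exact absurd hadj (hP hp₁ hp₂ hadj.ne)

lemma sq_edgeForm_le (x : V → ℝ) (A B : Finset V) :
    edgeForm G x A B ^ 2 ≤ (#A * #B : ℝ) * ((∑ a ∈ A, x a ^ 2) * ∑ b ∈ B, x b ^ 2) := by
  refine (sq_sum_mul_le_card_mul (filter_subset _ _) x).trans ?_
  gcongr
  exact_mod_cast card_interedges_le_mul G A B

lemma neg_edgeForm_self_le (x : V → ℝ) (S : Finset V) :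
    -edgeForm G x S S ≤ #S * ∑ v ∈ S, x v ^ 2 := by
  refine le_of_sq_le_sq ?_ (by positivity)
  rw [neg_sq, mul_pow, sq (#S : ℝ), sq (∑ v ∈ S, x v ^ 2)]
  exact sq_edgeForm_le x S S

variable [DecidableEq V]

lemma edgeForm_union_right (x : V → ℝ) (A : Finset V) {B C : Finset V} (h : Disjoint B C) :
    edgeForm G x A (B ∪ C) = edgeForm G x A B + edgeForm G x A C := by
  simp only [edgeForm_eq_sum_mul_sum, sum_filter, sum_union h, mul_add, sum_add_distrib]

lemma edgeForm_union_self (x : V → ℝ) {A B : Finset V} (h : Disjoint A B) :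
    edgeForm G x (A ∪ B) (A ∪ B) =
      edgeForm G x A A + 2 * edgeForm G x A B + edgeForm G x B B := by
  rw [edgeForm_union_right x _ h, edgeForm_comm x _ A, edgeForm_comm x _ B,
    edgeForm_union_right x _ h, edgeForm_union_right x _ h, edgeForm_comm x B A]
  ring

lemma edgeForm_union_self_le_of_isIndepSet {P Q : Finset V} (hP : G.IsIndepSet P)
    (hQ : G.IsIndepSet Q) (h : Disjoint P Q) (x : V → ℝ) :
    edgeForm G x (P ∪ Q) (P ∪ Q) ≤
      √((#(P ∪ Q) ^ 2 / 4 : ℕ) : ℝ) * ∑ v ∈ P ∪ Q, x v ^ 2 := by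
  have hcard : (#P * #Q : ℝ) ≤ ((#(P ∪ Q) ^ 2 / 4 : ℕ) : ℝ) :=
    mod_cast mul_le_sq_div_four (card_union_of_disjoint h).ge
  rw [edgeForm_union_self x h, edgeForm_eq_zero_of_isIndepSet hP,
    edgeForm_eq_zero_of_isIndepSet hQ, zero_add, add_zero, sum_union h]
  set p := ∑ v ∈ P, x v ^ 2
  set q := ∑ v ∈ Q, x v ^ 2
  have : 0 ≤ p := sum_nonneg fun _ _ => sq_nonneg _
  have : 0 ≤ q := sum_nonneg fun _ _ => sq_nonneg _
  refine le_of_sq_le_sq ?_ (by positivity)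
  rw [mul_pow, mul_pow, Real.sq_sqrt (Nat.cast_nonneg _)]
  calc (2 : ℝ) ^ 2 * edgeForm G x P Q ^ 2
      ≤ 2 ^ 2 * ((#P * #Q) * (p * q)) := by gcongr; exact sq_edgeForm_le x P Q
    _ = (#P * #Q) * (4 * p * q) := by ring
    _ ≤ ((#(P ∪ Q) ^ 2 / 4 : ℕ) : ℝ) * (p + q) ^ 2 := by
        gcongr
        exact four_mul_le_sq_add p q

end EdgeForm

section Numeric

lemma half_sub_le_sqrt_sq_div_four {n : ℕ} (hn : 100 ≤ n) :
    (n : ℝ) / 2 - 1 / 50 ≤ √((n ^ 2 / 4 : ℕ) : ℝ) := by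
  have hn' : (100 : ℝ) ≤ n := mod_cast hn
  have hfloor : (n : ℝ) ^ 2 ≤ 4 * ((n ^ 2 / 4 : ℕ) : ℝ) + 3 := by
    have : n ^ 2 ≤ 4 * (n ^ 2 / 4) + 3 := by omega
    exact_mod_cast this
  exact Real.le_sqrt_of_sq_le (by nlinarith)

lemma sqrt_sq_div_four_le_half (m : ℕ) : √((m ^ 2 / 4 : ℕ) : ℝ) ≤ m / 2 := by
  rw [Real.sqrt_le_left (by positivity), div_pow]
  exact Nat.cast_div_le.trans (by norm_num)

/- The mass `p` of the exceptional set is of order `s / n`, so the loss of `s / 2` in `K` against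
`n / 2` outweighs the contribution of the exceptional set to the quadratic form. -/
lemma mul_add_mul_lt_of_exceptional_mass_small {n s μ K W p : ℝ} (hn : 100 ≤ n) (hs₁ : 1 ≤ s)
    (hs : s ≤ n / 250) (hμ : n / 2 - 1 / 50 ≤ μ) (hW : 0 < W) (hK : K ≤ (n - s) / 2)
    (hpμ : μ ^ 2 * p ≤ s * (n / 5) * W) :
    K * (W - p) + (μ + s) * p < μ * (W - p) := by
  have hμ0 : 0 < μ := by linarith
  have mass_mul_le : p * μ ≤ 0.401 * s * W := by
    refine le_of_mul_le_mul_right ?_ hμ0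
    have hsW : 0 ≤ s * W := by positivity
    nlinarith [mul_le_mul_of_nonneg_left hμ hsW, mul_le_mul_of_nonneg_left hn hsW]
  have mass_le : p ≤ 0.0034 * W := by
    refine le_of_mul_le_mul_right (mass_mul_le.trans ?_) hμ0
    have hsμ : s ≤ 0.0081 * μ := by linarith
    nlinarith [mul_le_mul_of_nonneg_right hsμ hW.le, mul_pos hμ0 hW]
  have gap : 0.48 * s * (W - p) ≤ (μ - K) * (W - p) := by
    gcongr <;> linarith
  nlinarith [mul_le_mul_of_nonneg_left mass_le (by linarith : 0 ≤ s),
    mul_pos (by linarith : 0 < s) hW]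

end Numeric

variable {V : Type*} [Fintype V] [DecidableEq V] {G : SimpleGraph V} [DecidableRel G.Adj]

lemma mul_sum_sq_le_of_isIndepSet {x : V → ℝ} {μ : ℝ}
    (hx : ∀ v, ∑ w ∈ G.neighborFinset v, x w = μ * x v) {P Q : Finset V} (hP : G.IsIndepSet P)
    (hQ : G.IsIndepSet Q) :
    μ * ∑ v ∈ P ∪ Q, x v ^ 2 ≤ √((#(P ∪ Q) ^ 2 / 4 : ℕ) : ℝ) * ∑ v ∈ P ∪ Q, x v ^ 2 +
      (μ + #(P ∪ Q)ᶜ) * ∑ v ∈ (P ∪ Q)ᶜ, x v ^ 2 := by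
  set R := P ∪ Q
  have row (A B : Finset V) (hAB : Aᶜ = B) :
      edgeForm G x A A + edgeForm G x A B = μ * ∑ v ∈ A, x v ^ 2 := by
    rw [← edgeForm_union_right _ _ (hAB ▸ disjoint_compl_right), ← hAB, union_compl,
      edgeForm_univ_right_eq_mul hx]
  have hRR : edgeForm G x R R ≤ √((#R ^ 2 / 4 : ℕ) : ℝ) * ∑ v ∈ R, x v ^ 2 := by
    have hQP : G.IsIndepSet (Q \ P : Finset V) := hQ.mono (coe_subset.2 sdiff_subset)
    simpa only [union_sdiff_self_eq_union] using
      edgeForm_union_self_le_of_isIndepSet hP hQP disjoint_sdiff x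
  have hSS := neg_edgeForm_self_le (G := G) x Rᶜ
  have hcomm := edgeForm_comm (G := G) x R Rᶜ
  linarith [row R Rᶜ rfl, row Rᶜ R (compl_compl R)]

theorem specRad_le_of_isIndepSet_of_degree_compl_le {P Q : Finset V}
    (hP : G.IsIndepSet P) (hQ : G.IsIndepSet Q) (hn : 100 ≤ Fintype.card V)
    (hdeg : ∀ v ∈ (P ∪ Q)ᶜ, (G.degree v : ℝ) ≤ Fintype.card V / 5)
    (hcard : (#(P ∪ Q)ᶜ : ℝ) ≤ Fintype.card V / 250) :
    specRad G ≤ √((Fintype.card V ^ 2 / 4 : ℕ) : ℝ) := by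
  have : Nonempty V := Fintype.card_pos_iff.1 (by omega)
  obtain ⟨x, hx0, hx⟩ := exists_specRad_eigenvector G
  have hpos := sum_sq_pos_of_ne_zero hx0
  have hmain := mul_sum_sq_le_of_isIndepSet hx hP hQ
  rcases (P ∪ Q)ᶜ.eq_empty_or_nonempty with hS | hS
  · rw [hS, compl_eq_empty_iff _ |>.1 hS, sum_empty, mul_zero, add_zero, card_univ] at hmain
    exact le_of_mul_le_mul_right hmain hpos
  · by_contra! hlt
    have hmass : ∑ v ∈ P ∪ Q, x v ^ 2 = ∑ v, x v ^ 2 - ∑ v ∈ (P ∪ Q)ᶜ, x v ^ 2 := by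
      rw [← sum_add_sum_compl (P ∪ Q), add_sub_cancel_right]
    have hsize : (#(P ∪ Q) : ℝ) = Fintype.card V - #(P ∪ Q)ᶜ := by
      rw [← card_add_card_compl (P ∪ Q), Nat.cast_add, add_sub_cancel_right]
    rw [hmass] at hmain
    refine absurd hmain (not_le.2 ?_)
    exact mul_add_mul_lt_of_exceptional_mass_small (mod_cast hn) (mod_cast hS.card_pos) hcard
      ((half_sub_le_sqrt_sq_div_four hn).trans hlt.le) hpos
      (hsize ▸ sqrt_sq_div_four_le_half _) (sq_mul_sum_sq_le_of_degree_le hx hdeg)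

end NearBipartite

section AlmostComplete

variable {V : Type*} {G : SimpleGraph V}

/-- The graph `G` contains the cycle `C_l` as a (not necessarily induced) subgraph. -/
def HasCycleOfLength (G : SimpleGraph V) (l : ℕ) : Prop :=
  ∃ (v : V) (c : G.Walk v v), c.IsCycle ∧ c.length = l

lemma hasCycleOfLength_of_isPath {a b y : V} {q : G.Walk a b} (hq : q.IsPath) (hab : a ≠ b)
    (hy : y ∉ q.support) (hya : G.Adj y a) (hby : G.Adj b y) :
    HasCycleOfLength G (q.length + 2) := by
  refine ⟨y, .cons hya (q.concat hby), ?_, by simp⟩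
  refine Walk.cons_isCycle_iff _ _ |>.2 ⟨(Walk.concat_isPath_iff hby).2 ⟨hq, hy⟩, fun hedge => ?_⟩
  rw [Walk.edges_concat, List.concat_eq_append, List.mem_append, List.mem_singleton] at hedge
  rcases hedge with hedge | hedge
  · exact hy (Walk.fst_mem_support_of_mem_edges _ hedge)
  · rcases Sym2.eq_iff.1 hedge with ⟨-, hay⟩ | ⟨-, hab'⟩
    · exact hya.ne' hay
    · exact hab hab'

lemma hasCycleOfLength_three {u v w : V} (huv : G.Adj u v) (huw : G.Adj u w) (hvw : G.Adj v w) :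
    HasCycleOfLength G 3 :=
  hasCycleOfLength_of_isPath (q := hvw.toWalk) (by simp [Walk.isPath_def, hvw.ne]) hvw.ne
    (by simp [huv.ne, huw.ne]) huv huw.symm

/-- Every vertex of `X` is adjacent to all but at most `d` vertices of `Y`. -/
def AlmostComplete (G : SimpleGraph V) [DecidableRel G.Adj] (d : ℕ) (X Y : Finset V) : Prop :=
  ∀ x ∈ X, #{y ∈ Y | ¬ G.Adj x y} ≤ d

variable [DecidableRel G.Adj] {X Y A B : Finset V} {d : ℕ}

namespace AlmostComplete

lemma card_le_card_adj_add (h : AlmostComplete G d X Y) {x : V} (hx : x ∈ X) :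
    #Y ≤ #{y ∈ Y | G.Adj x y} + d := by
  rw [← card_filter_add_card_filter_not (s := Y) (G.Adj x)]
  exact Nat.add_le_add_left (h x hx) _

lemma exists_common_neighbor (h : AlmostComplete G d X Y) {x x' : V} (hx : x ∈ X) (hx' : x' ∈ X)
    {F : Finset V} (hF : #F + 2 * d < #Y) : ∃ y ∉ F, G.Adj x y ∧ G.Adj x' y := by
  classical
  by_contra! none
  have hsub : Y ⊆ F ∪ ({y ∈ Y | ¬ G.Adj x y} ∪ {y ∈ Y | ¬ G.Adj x' y}) := by
    intro y hy
    simp only [mem_union, mem_filter, hy, true_and]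
    have := none y
    tauto
  have hcard := (card_le_card hsub).trans (card_union_le _ _)
  have := card_union_le {y ∈ Y | ¬ G.Adj x y} {y ∈ Y | ¬ G.Adj x' y}
  have := h x hx
  have := h x' hx'
  omega

lemma exists_isPath_length_eq_disjoint (h : AlmostComplete G d X Y) (t : ℕ) {F : Finset V}
    {x x' : V} (hx : x ∈ X) (hx' : x' ∈ X) (hne : x ≠ x') (hxF : x ∉ F) (hxF' : x' ∉ F)
    (hX : #F + 2 * t < #X) (hY : #F + 2 * t + 2 * d < #Y) :
    ∃ p : G.Walk x x', p.IsPath ∧ p.length = 2 * (t + 1) ∧ ∀ v ∈ p.support, v ∉ F := by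
  classical
  induction t generalizing F x with
  | zero =>
    obtain ⟨y, hyF, hxy, hx'y⟩ := h.exists_common_neighbor hx hx' hY
    refine ⟨.cons hxy (.cons hx'y.symm .nil), ?_, rfl, ?_⟩
    · simp [Walk.isPath_def, hne, hxy.ne, hx'y.ne']
    · simp [hxF, hyF, hxF']
  | succ t ih =>
    have card_insert₂ (a b : V) : #(insert a (insert b F)) ≤ #F + 2 :=
      (card_insert_le _ _).trans (Nat.add_le_add_right (card_insert_le _ _) 1)
    obtain ⟨x₁, hx₁, hx₁F⟩ : ∃ x₁ ∈ X, x₁ ∉ insert x (insert x' F) := by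
      have := card_insert₂ x x'
      exact exists_mem_notMem_of_card_lt_card (by omega)
    obtain ⟨y, hyF, hxy, hx₁y⟩ := h.exists_common_neighbor (F := insert x' F) hx hx₁ (by
      have := card_insert_le x' F
      omega)
    simp only [mem_insert, not_or] at hx₁F hyF
    have hcard := card_insert₂ x y
    obtain ⟨p, hp, hlen, hpF⟩ := ih (F := insert x (insert y F)) hx₁ hx₁F.2.1
      (by simp [hx₁F, hx₁y.ne]) (by simp [hne.symm, Ne.symm hyF.1, hxF']) (by omega) (by omega)
    simp only [mem_insert, not_or] at hpF
    refine ⟨.cons hxy (.cons hx₁y.symm p), ?_, by simp [hlen]; ring, ?_⟩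
    · simp only [Walk.cons_isPath_iff, Walk.support_cons, List.mem_cons, hxy.ne, false_or]
      exact ⟨⟨hp, fun hy => (hpF y hy).2.1 rfl⟩, fun hx => (hpF x hx).1 rfl⟩
    · simp only [Walk.support_cons, List.mem_cons]
      rintro v (rfl | rfl | hv)
      exacts [hxF, hyF.2, (hpF v hv).2.2]

lemma hasCycleOfLength_even (h : AlmostComplete G d X Y) (t : ℕ) (hX : 2 * t + 1 < #X)
    (hY : 2 * t + 1 + 2 * d < #Y) : HasCycleOfLength G (2 * t + 4) := by
  obtain ⟨x, hx, x', hx', hne⟩ := one_lt_card.1 (show 1 < #X by omega)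
  obtain ⟨y, -, hxy, hx'y⟩ := h.exists_common_neighbor (F := ∅) hx hx' (by rw [card_empty]; omega)
  obtain ⟨p, hp, hlen, hpy⟩ := h.exists_isPath_length_eq_disjoint t (F := {y}) hx hx' hne
    (by simp [hxy.ne]) (by simp [hx'y.ne]) (by rw [card_singleton]; omega)
    (by rw [card_singleton]; omega)
  have hcycle := hasCycleOfLength_of_isPath hp hne (fun hy => hpy y hy (mem_singleton_self y))
    hxy.symm hx'y
  rwa [hlen] at hcycle

lemma hasCycleOfLength_odd (h : AlmostComplete G d X Y) (t : ℕ) (hX : 2 * t + 2 < #X)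
    (hY : 2 * t + 2 + 2 * d < #Y) {u v : V} (huv : G.Adj u v)
    (hu : 3 ≤ #{x ∈ X | G.Adj u x}) (hv : 3 ≤ #{x ∈ X | G.Adj v x}) :
    HasCycleOfLength G (2 * t + 5) := by
  classical
  obtain ⟨x, hx, hxv⟩ : ∃ x ∈ {x ∈ X | G.Adj u x}, x ∉ ({v} : Finset V) :=
    exists_mem_notMem_of_card_lt_card (by rw [card_singleton]; omega)
  obtain ⟨x', hx', hxu'⟩ : ∃ x' ∈ {x ∈ X | G.Adj v x}, x' ∉ ({u, x} : Finset V) :=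
    exists_mem_notMem_of_card_lt_card (card_le_two.trans_lt (by omega))
  simp only [mem_filter, mem_insert, mem_singleton, not_or] at hx hxv hx' hxu'
  have huv2 := card_le_two (a := u) (b := v)
  obtain ⟨p, hp, hlen, hpF⟩ := h.exists_isPath_length_eq_disjoint t (F := {u, v}) hx.1 hx'.1
    (Ne.symm hxu'.2) (by simp [hx.2.ne', hxv]) (by simp [hxu'.1, hx'.2.ne']) (by omega) (by omega)
  simp only [mem_insert, mem_singleton, not_or] at hpF
  have hcycle := hasCycleOfLength_of_isPath (q := .cons hx.2 p)
    (hp.cons fun hu => (hpF u hu).1 rfl) (Ne.symm hxu'.1)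
    (by simpa [huv.ne'] using fun hv => (hpF v hv).2 rfl) huv.symm hx'.2.symm
  rwa [Walk.length_cons, hlen] at hcycle

end AlmostComplete

lemma sub_le_card_filter_le_floor {α : Type*} {A : Finset α} {f : α → ℕ} {τ : ℝ} (hτ : 0 < τ)
    (hf : (∑ a ∈ A, f a : ℝ) ≤ τ ^ 2) : #A - τ ≤ (#{a ∈ A | f a ≤ ⌊τ⌋₊} : ℝ) := by
  have markov : #{a ∈ A | ¬ f a ≤ ⌊τ⌋₊} * τ ≤ τ * τ :=
    calc #{a ∈ A | ¬ f a ≤ ⌊τ⌋₊} * τ ≤ ∑ a ∈ A with ¬ f a ≤ ⌊τ⌋₊, (f a : ℝ) := by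
          rw [← nsmul_eq_mul]
          refine card_nsmul_le_sum _ _ _ fun a ha => ?_
          exact (Nat.lt_of_floor_lt (not_le.1 (mem_filter.1 ha).2)).le
      _ ≤ ∑ a ∈ A, (f a : ℝ) :=
          sum_le_sum_of_subset_of_nonneg (filter_subset _ _) fun _ _ _ => Nat.cast_nonneg _
      _ ≤ τ * τ := by rwa [← sq]
  have hsplit : (#{a ∈ A | f a ≤ ⌊τ⌋₊} : ℝ) + #{a ∈ A | ¬ f a ≤ ⌊τ⌋₊} = #A :=
    mod_cast card_filter_add_card_filter_not (s := A) (f · ≤ ⌊τ⌋₊)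
  linarith [le_of_mul_le_mul_right markov hτ]

lemma card_interedges_eq_sum_card (A B : Finset V) :
    #(G.interedges A B) = ∑ a ∈ A, #{b ∈ B | G.Adj a b} := by
  simp only [interedges_def, card_filter, sum_product]

lemma sum_card_not_adj_eq (A B : Finset V) :
    (∑ a ∈ A, #{b ∈ B | ¬ G.Adj a b} : ℝ) = #A * #B - #(G.interedges A B) := by
  have hsplit (a : V) : (#{b ∈ B | ¬ G.Adj a b} : ℝ) = #B - #{b ∈ B | G.Adj a b} := by
    rw [← card_filter_add_card_filter_not (s := B) (G.Adj a), Nat.cast_add, add_sub_cancel_left]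
  simp only [hsplit, sum_sub_distrib, sum_const, nsmul_eq_mul, card_interedges_eq_sum_card,
    Nat.cast_sum]

lemma sum_card_not_adj_le {n τ : ℝ} (hAB : (#A + #B : ℝ) = n)
    (hcut : n ^ 2 / 4 - τ ^ 2 ≤ #(G.interedges A B)) :
    (∑ a ∈ A, #{b ∈ B | ¬ G.Adj a b} : ℝ) ≤ τ ^ 2 := by
  rw [sum_card_not_adj_eq]
  nlinarith [sq_nonneg (#A - #B : ℝ)]

lemma abs_card_sub_card_le {n τ : ℝ} (hτ : 0 < τ) (hAB : (#A + #B : ℝ) = n)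
    (hcut : n ^ 2 / 4 - τ ^ 2 ≤ #(G.interedges A B)) : |(#A - #B : ℝ)| ≤ 2 * τ := by
  have hle : (#(G.interedges A B) : ℝ) ≤ #A * #B := mod_cast card_interedges_le_mul G A B
  refine abs_le_of_sq_le_sq ?_ (by positivity)
  nlinarith

lemma exists_almostComplete_of_large_cut [Fintype V] [DecidableEq V] {τ : ℝ} (hτ : 0 < τ)
    {A : Finset V} (hcut : (Fintype.card V : ℝ) ^ 2 / 4 - τ ^ 2 ≤ #(G.interedges A Aᶜ)) :
    ∃ X ⊆ A, ∃ Y ⊆ Aᶜ, AlmostComplete G ⌊τ⌋₊ X Y ∧ AlmostComplete G ⌊τ⌋₊ Y X ∧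
      (Fintype.card V : ℝ) / 2 - 2 * τ ≤ #X ∧ (Fintype.card V : ℝ) / 2 - 2 * τ ≤ #Y := by
  have hcard : (#A + #Aᶜ : ℝ) = Fintype.card V := mod_cast card_add_card_compl A
  have hcard' : (#Aᶜ + #A : ℝ) = Fintype.card V := by rw [add_comm, hcard]
  have hcut' : (Fintype.card V : ℝ) ^ 2 / 4 - τ ^ 2 ≤ #(G.interedges Aᶜ A) := by
    have := G.symm
    rwa [SimpleGraph.interedges, Rel.card_interedges_comm]
  obtain ⟨balanced, balanced'⟩ := abs_le.1 (abs_card_sub_card_le hτ hcard hcut)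
  have hX := sub_le_card_filter_le_floor hτ (sum_card_not_adj_le hcard hcut)
  have hY := sub_le_card_filter_le_floor hτ (sum_card_not_adj_le hcard' hcut')
  refine ⟨{a ∈ A | #{b ∈ Aᶜ | ¬ G.Adj a b} ≤ ⌊τ⌋₊}, filter_subset _ _,
    {b ∈ Aᶜ | #{a ∈ A | ¬ G.Adj b a} ≤ ⌊τ⌋₊}, filter_subset _ _,
    fun x hx => ?_, fun y hy => ?_, by linarith, by linarith⟩
  · exact (card_le_card (filter_subset_filter _ (filter_subset _ _))).trans (mem_filter.1 hx).2
  · exact (card_le_card (filter_subset_filter _ (filter_subset _ _))).trans (mem_filter.1 hy).2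

end AlmostComplete

section Extremal

variable {V : Type*} [Fintype V] [DecidableEq V] {G : SimpleGraph V} [DecidableRel G.Adj]

lemma degree_le_card_adj_add_card_adj_add (X Y : Finset V) (v : V) :
    G.degree v ≤ #{x ∈ X | G.Adj v x} + #{y ∈ Y | G.Adj v y} + #(X ∪ Y)ᶜ := by
  have hsub : G.neighborFinset v ⊆ {x ∈ X | G.Adj v x} ∪ {y ∈ Y | G.Adj v y} ∪ (X ∪ Y)ᶜ := by
    intro w hw
    simp only [mem_neighborFinset, mem_union, mem_filter, mem_compl] at hw ⊢
    tauto
  exact (card_le_card hsub).trans <|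
    (card_union_le _ _).trans (Nat.add_le_add_right (card_union_le _ _) _)

/- If all vertices with three neighbours in `X` were independent, and likewise for `Y`, then `G`
would be bipartite outside a small set of vertices of small degree. -/
lemma exists_adj_of_almostComplete (hn : 1000 ≤ Fintype.card V)
    (hρ : √((Fintype.card V ^ 2 / 4 : ℕ) : ℝ) < specRad G) {X Y : Finset V} (hXY : Disjoint X Y)
    (h : AlmostComplete G (Fintype.card V / 1000) X Y)
    (h' : AlmostComplete G (Fintype.card V / 1000) Y X)
    (hX : 498 * Fintype.card V ≤ 1000 * #X) (hY : 498 * Fintype.card V ≤ 1000 * #Y) :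
    ∃ u v, G.Adj u v ∧ (3 ≤ #{x ∈ X | G.Adj u x} ∧ 3 ≤ #{x ∈ X | G.Adj v x} ∨
      3 ≤ #{y ∈ Y | G.Adj u y} ∧ 3 ≤ #{y ∈ Y | G.Adj v y}) := by
  by_contra! none
  set P : Finset V := {v | 3 ≤ #{x ∈ X | G.Adj v x}}
  set Q : Finset V := {v | 3 ≤ #{y ∈ Y | G.Adj v y}}
  have hP : G.IsIndepSet P := fun u hu v hv _ huv =>
    ((none u v huv).1 (mem_filter.1 hu).2).not_ge (mem_filter.1 hv).2
  have hQ : G.IsIndepSet Q := fun u hu v hv _ huv =>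
    ((none u v huv).2 (mem_filter.1 hu).2).not_ge (mem_filter.1 hv).2
  have hrest := card_add_card_compl (X ∪ Y)
  rw [card_union_of_disjoint hXY] at hrest
  have hsmall : (P ∪ Q)ᶜ ⊆ (X ∪ Y)ᶜ := by
    refine compl_subset_compl.2 (union_subset (fun x hx => ?_) fun y hy => ?_)
    · have := h.card_le_card_adj_add hx
      exact mem_union_right _ (mem_filter.2 ⟨mem_univ x, by omega⟩)
    · have := h'.card_le_card_adj_add hy
      exact mem_union_left _ (mem_filter.2 ⟨mem_univ y, by omega⟩)
  refine hρ.not_ge (specRad_le_of_isIndepSet_of_degree_compl_le hP hQ (by omega)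
    (fun v hv => ?_) ?_)
  · have hdeg := degree_le_card_adj_add_card_adj_add (G := G) X Y v
    simp only [P, Q, mem_compl, mem_union, mem_filter, mem_univ, true_and, not_or, not_le] at hv
    rw [le_div_iff₀ (by norm_num)]
    exact_mod_cast (by omega : G.degree v * 5 ≤ Fintype.card V)
  · have := card_le_card hsmall
    rw [le_div_iff₀ (by norm_num)]
    exact_mod_cast (by omega : #(P ∪ Q)ᶜ * 250 ≤ Fintype.card V)

theorem hasCycleOfLength_of_large_cut (hn : 1000 ≤ Fintype.card V)
    (hρ : √((Fintype.card V ^ 2 / 4 : ℕ) : ℝ) < specRad G) {A : Finset V}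
    (hcut : (Fintype.card V : ℝ) ^ 2 / 4 - (Fintype.card V / 1000 : ℝ) ^ 2 ≤
      #(G.interedges A Aᶜ)) {l : ℕ} (hl : 4 ≤ l) (hl' : 4 * l ≤ Fintype.card V) :
    HasCycleOfLength G l := by
  have : 0 < Fintype.card V := by omega
  obtain ⟨X, hXA, Y, hYA, h, h', hX, hY⟩ := exists_almostComplete_of_large_cut (by positivity) hcut
  have hfloor : ⌊(Fintype.card V / 1000 : ℝ)⌋₊ = Fintype.card V / 1000 :=
    Nat.floor_div_ofNat (K := ℝ) _ 1000 |>.trans (by rw [Nat.floor_natCast])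
  rw [hfloor] at h h'
  have hX : 498 * Fintype.card V ≤ 1000 * #X := by rify; linarith
  have hY : 498 * Fintype.card V ≤ 1000 * #Y := by rify; linarith
  have hXY : Disjoint X Y := disjoint_compl_right.mono hXA hYA
  obtain ⟨t, rfl | rfl⟩ : ∃ t, l = 2 * t + 4 ∨ l = 2 * t + 5 := ⟨(l - 4) / 2, by omega⟩
  · exact h.hasCycleOfLength_even t (by omega) (by omega)
  · obtain ⟨u, v, huv, ⟨hu, hv⟩ | ⟨hu, hv⟩⟩ :=
      exists_adj_of_almostComplete hn hρ hXY h h' hX hY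
    · exact h.hasCycleOfLength_odd t (by omega) (by omega) huv hu hv
    · exact h'.hasCycleOfLength_odd t (by omega) (by omega) huv hu hv

end Extremal

section ClusterModel

variable {V K : Type*} {G : SimpleGraph V} [DecidableRel G.Adj] {R : SimpleGraph K}
  {cl : K → Finset V} {e κ γ : ℝ} {A B C : Finset V}

/-- One-sided regularity of the pair `(A, B)`: in any `A' ⊆ A` and `B' ⊆ B` occupying at least a
proportion `e` of their parts, some vertex of `A'` is adjacent to a proportion `κ` of `B'`. This is
the only consequence of `e`-uniformity that the greedy embedding of paths needs. -/
def IsLowerRegular (G : SimpleGraph V) [DecidableRel G.Adj] (e κ : ℝ) (A B : Finset V) : Prop :=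
  ∀ A' ⊆ A, ∀ B' ⊆ B, e * #A ≤ #A' → e * #B ≤ #B' →
    ∃ x ∈ A', κ * #B' ≤ #{y ∈ B' | G.Adj x y}

/-- The graph `R` describes `G` up to regularity: its vertices are blown up to the disjoint sets
`cl a`, of size at least `e⁻¹`, and its edges to lower-regular pairs. -/
structure IsClusterModel (G : SimpleGraph V) [DecidableRel G.Adj] (R : SimpleGraph K)
    (cl : K → Finset V) (e κ : ℝ) : Prop where
  disjoint : ∀ a b, a ≠ b → Disjoint (cl a) (cl b)
  isLowerRegular : ∀ a b, R.Adj a b → IsLowerRegular G e κ (cl a) (cl b)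
  one_le : ∀ a, 1 ≤ e * #(cl a)

namespace IsLowerRegular

lemma exists_adj (h : IsLowerRegular G e κ A B) (hκ : 0 < κ) {S T : Finset V} (hSA : S ⊆ A)
    (hTB : T ⊆ B) (hS : e * #A ≤ #S) (hT : e * #B ≤ #T) (hT0 : T.Nonempty) :
    ∃ x ∈ S, ∃ y ∈ T, G.Adj x y := by
  obtain ⟨x, hx, hdeg⟩ := h S hSA T hTB hS hT
  have hT0' : (0 : ℝ) < #T := mod_cast hT0.card_pos
  have hpos : (0 : ℝ) < #{y ∈ T | G.Adj x y} := (mul_pos hκ hT0').trans_le hdeg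
  obtain ⟨y, hy⟩ := card_pos.1 (Nat.cast_pos.1 hpos)
  exact ⟨x, hx, y, (mem_filter.1 hy).1, (mem_filter.1 hy).2⟩

lemma exists_le_card_adj (h : IsLowerRegular G e κ A B) (hκ : 0 ≤ κ) (hγ : e ≤ γ)
    (hκγ : e ≤ κ * γ) {S U : Finset V} (hSA : S ⊆ A) (hUB : U ⊆ B) (hS : e * #A ≤ #S)
    (hU : γ * #B ≤ #U) : ∃ x ∈ S, e * #B ≤ #{y ∈ U | G.Adj x y} := by
  obtain ⟨x, hx, hdeg⟩ := h S hSA U hUB hS (le_trans (by gcongr) hU)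
  refine ⟨x, hx, le_trans ?_ hdeg⟩
  calc e * #B ≤ κ * γ * #B := by gcongr
    _ = κ * (γ * #B) := mul_assoc _ _ _
    _ ≤ κ * #U := by gcongr

lemma card_filter_lt (h : IsLowerRegular G e κ A B) (he : e ≤ 1) :
    (#{x ∈ A | #{y ∈ B | G.Adj x y} < κ * #B} : ℝ) < e * #A := by
  by_contra! hcon
  obtain ⟨x, hx, hdeg⟩ := h _ (filter_subset _ _) B subset_rfl hcon
    (mul_le_of_le_one_left (Nat.cast_nonneg _) he)
  exact (mem_filter.1 hx).2.not_ge hdeg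

lemma exists_le_card_adj_and_le_card_adj (hB : IsLowerRegular G e κ A B)
    (hC : IsLowerRegular G e κ A C) (he : e ≤ 1 / 2) :
    ∃ x ∈ A, κ * #B ≤ #{y ∈ B | G.Adj x y} ∧ κ * #C ≤ #{y ∈ C | G.Adj x y} := by
  classical
  by_contra! none
  have hsub : A ⊆ {x ∈ A | #{y ∈ B | G.Adj x y} < κ * #B} ∪
      {x ∈ A | #{y ∈ C | G.Adj x y} < κ * #C} := by
    intro x hx
    simp only [mem_union, mem_filter, hx, true_and]
    exact or_iff_not_imp_left.2 fun hxB => none x hx (not_lt.1 hxB)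
  have hcard : (#A : ℝ) ≤ #{x ∈ A | #{y ∈ B | G.Adj x y} < κ * #B} +
      #{x ∈ A | #{y ∈ C | G.Adj x y} < κ * #C} :=
    mod_cast (card_le_card hsub).trans (card_union_le _ _)
  have := hB.card_filter_lt (by linarith)
  have := hC.card_filter_lt (by linarith)
  have : e * #A ≤ 1 / 2 * #A := by gcongr
  linarith

end IsLowerRegular

lemma exists_subset_le_card_le_two_mul {N : Finset V} {r : ℝ} (hr : 1 ≤ r) (hN : 2 * r ≤ #N) :
    ∃ T ⊆ N, r ≤ #T ∧ (#T : ℝ) ≤ 2 * r := by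
  have hceil := Nat.ceil_lt_add_one (zero_le_one.trans hr)
  obtain ⟨T, hTN, hT⟩ := exists_subset_card_eq (s := N) (n := ⌈r⌉₊)
    (Nat.ceil_le.2 (by linarith))
  exact ⟨T, hTN, hT ▸ Nat.le_ceil r, by rw [hT]; linarith⟩

namespace IsClusterModel

lemma card_inter_le_of_subset [DecidableEq V] (h : IsClusterModel G R cl e κ) (he : 0 < e) {b : K}
    {T : Finset V} (hTb : T ⊆ cl b) (hT : (#T : ℝ) ≤ 2 * (e * #(cl b))) (c : K) :
    (#(cl c ∩ T) : ℝ) ≤ 2 * (e * #(cl c)) := by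
  by_cases hcb : c = b
  · subst hcb
    exact le_trans (mod_cast card_le_card inter_subset_right) hT
  · rw [disjoint_iff_inter_eq_empty.1 ((h.disjoint c b hcb).mono_right hTb), card_empty]
    push_cast
    positivity

variable [DecidableEq K]

lemma card_inter_insert_add_count_le [DecidableEq V] (h : IsClusterModel G R cl e κ) {a a' b : K}
    (haa' : R.Adj a a') (p : R.Walk a' b) {x : V} (hx : x ∈ cl a) (F : Finset V) (c : K) :
    #(cl c ∩ insert x F) + p.support.count c ≤
      #(cl c ∩ F) + (Walk.cons haa' p).support.count c := by
  rw [Walk.support_cons]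
  by_cases hac : a = c
  · subst hac
    rw [inter_insert_of_mem hx, List.count_cons_self]
    have := card_insert_le x (cl a ∩ F)
    omega
  · rw [inter_insert_of_notMem (disjoint_left.1 (h.disjoint a c hac) hx),
      List.count_cons_of_ne hac]

/- The path is built greedily from `S`: the set `F` contains the target `T` and all vertices already
used, and the current candidates for the next vertex always fill a proportion `e` of a cluster. -/
lemma exists_isPath_of_walk [DecidableEq V] (h : IsClusterModel G R cl e κ) (hκ : 0 < κ)
    (hγ : e ≤ γ) (hκγ : e ≤ κ * γ) {a b : K} (p : R.Walk a b) (hp : p.length ≠ 0)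
    {F S T : Finset V} (hSa : S ⊆ cl a) (hTb : T ⊆ cl b) (hTF : T ⊆ F) (hS : e * #(cl a) ≤ #S)
    (hT : e * #(cl b) ≤ #T) (hSF : Disjoint S F)
    (hcount : ∀ c, (#(cl c ∩ F) + p.support.count c : ℝ) ≤ (1 - γ) * #(cl c)) :
    ∃ x ∈ S, ∃ y ∈ T, ∃ q : G.Walk x y, q.IsPath ∧ q.length = p.length ∧
      ∀ v ∈ q.support, v ∈ F → v = y := by
  induction p generalizing F S with
  | nil => exact absurd rfl hp
  | @cons a a' b haa' p ih =>
    have hreg := h.isLowerRegular a a' haa'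
    by_cases hp0 : p.length = 0
    · obtain rfl := Walk.eq_of_length_eq_zero hp0
      have hT0 : T.Nonempty := card_pos.1 <| Nat.cast_pos.1 <|
        zero_lt_one.trans_le ((h.one_le _).trans hT)
      obtain ⟨x, hx, y, hy, hxy⟩ := hreg.exists_adj hκ hSa hTb hS hT hT0
      refine ⟨x, hx, y, hy, hxy.toWalk, by simp [Walk.isPath_def, hxy.ne], by simp [hp0], ?_⟩
      simp [disjoint_left.1 hSF hx]
    · have hfree : γ * #(cl a') ≤ (#(cl a' \ F) : ℝ) := by
        have hsplit : (#(cl a' \ F) : ℝ) + #(cl a' ∩ F) = #(cl a') :=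
          mod_cast card_sdiff_add_card_inter (cl a') F
        have : (0 : ℝ) ≤ (Walk.cons haa' p).support.count a' := Nat.cast_nonneg _
        linarith [hcount a']
      obtain ⟨x, hx, hdeg⟩ := hreg.exists_le_card_adj hκ.le hγ hκγ hSa sdiff_subset hS hfree
      have hxF : x ∉ F := disjoint_left.1 hSF hx
      obtain ⟨x', hx', y, hy, q, hq, hlen, hqF⟩ := ih hp0 (F := insert x F)
        ((filter_subset _ _).trans sdiff_subset) hTb (hTF.trans (subset_insert x F)) hdeg hT
        (disjoint_insert_right.2 ⟨by simp, disjoint_sdiff_self_left.mono_left (filter_subset _ _)⟩)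
        fun c => le_trans (mod_cast h.card_inter_insert_add_count_le haa' p (hSa hx) F c)
          (hcount c)
      have hxq : x ∉ q.support := fun hxq =>
        hxF (hqF x hxq (mem_insert_self x F) ▸ hTF hy)
      refine ⟨x, hx, y, hy, .cons (mem_filter.1 hx').2 q, hq.cons hxq, by simp [hlen], ?_⟩
      simp only [Walk.support_cons, List.mem_cons, forall_eq_or_imp]
      exact ⟨fun hx => absurd hx hxF, fun v hv hvF => hqF v hv (mem_insert_of_mem hvF)⟩

lemma hasCycleOfLength_of_walk (h : IsClusterModel G R cl e κ) (he : 0 < e) (he2 : e ≤ 1 / 2)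
    (hκ : 3 * e ≤ κ) (hγ : e ≤ γ) (hκγ : e ≤ κ * γ) {a b r : K} (p : R.Walk a b)
    (hp : p.length ≠ 0) (hra : R.Adj r a) (hrb : R.Adj r b)
    (hcount : ∀ c, (p.support.count c + 1 + 2 * (e * #(cl c)) : ℝ) ≤ (1 - γ) * #(cl c)) :
    HasCycleOfLength G (p.length + 2) := by
  classical
  obtain ⟨x₀, -, hx₀a, hx₀b⟩ := (h.isLowerRegular r a hra).exists_le_card_adj_and_le_card_adj
    (h.isLowerRegular r b hrb) he2
  obtain ⟨T, hTN, hT, hT'⟩ := exists_subset_le_card_le_two_mul (h.one_le b)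
    (N := {y ∈ cl b | G.Adj x₀ y}) (by nlinarith [h.one_le b])
  have hTb : T ⊆ cl b := hTN.trans (filter_subset _ _)
  have hTadj (y : V) (hy : y ∈ T) : G.Adj x₀ y := (mem_filter.1 (hTN hy)).2
  have hclT := h.card_inter_le_of_subset he hTb hT'
  have hS : e * #(cl a) ≤ (#({y ∈ cl a | G.Adj x₀ y} \ T) : ℝ) := by
    have hinter : (#({y ∈ cl a | G.Adj x₀ y} ∩ T) : ℝ) ≤ #(cl a ∩ T) :=
      mod_cast card_le_card (inter_subset_inter_right (filter_subset _ _))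
    have hsplit : (#({y ∈ cl a | G.Adj x₀ y} \ T) : ℝ) + #({y ∈ cl a | G.Adj x₀ y} ∩ T) =
        #{y ∈ cl a | G.Adj x₀ y} := mod_cast card_sdiff_add_card_inter _ _
    nlinarith [hclT a, h.one_le a]
  obtain ⟨x, hx, y, hy, q, hq, hlen, hqF⟩ := h.exists_isPath_of_walk (by linarith) hγ hκγ p hp
    (F := insert x₀ T) (sdiff_subset.trans (filter_subset _ _)) hTb (subset_insert x₀ T) hS hT
    (disjoint_insert_right.2 ⟨by simp, sdiff_disjoint⟩) (fun c => by
      have hins : (#(cl c ∩ insert x₀ T) : ℝ) ≤ #(cl c ∩ T) + 1 :=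
        mod_cast (card_le_card (by grind)).trans (card_insert_le x₀ (cl c ∩ T))
      linarith [hclT c, hcount c])
  obtain ⟨hxN, hxT⟩ := mem_sdiff.1 hx
  rw [← hlen]
  exact hasCycleOfLength_of_isPath hq (fun hxy => hxT (hxy ▸ hy))
    (fun hx₀ => (hTadj y hy).ne (hqF x₀ hx₀ (mem_insert_self x₀ T)))
    (mem_filter.1 hxN).2 (hTadj y hy).symm

end IsClusterModel

end ClusterModel

section ReducedWalks

variable {K : Type*} [DecidableEq K] {R : SimpleGraph K} {r p a b : K}

lemma exists_closedWalk_oscillating (h : R.Adj a b) (t : ℕ) :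
    ∃ w : R.Walk a a, w.length = 2 * t ∧
      ∀ v, w.support.tail.count v ≤ if v = a ∨ v = b then t else 0 := by
  induction t with
  | zero => exact ⟨.nil, by simp, by simp⟩
  | succ t ih =>
    obtain ⟨w, hw, hcount⟩ := ih
    refine ⟨w.append (.cons h (.cons h.symm .nil)), by simp [hw]; ring, fun v => ?_⟩
    have hv := hcount v
    rw [Walk.tail_support_append, List.count_append]
    simp only [Walk.support_cons, Walk.support_nil, List.tail_cons, List.count_cons,
      List.count_nil, beq_iff_eq]
    have := h.ne
    grind

variable [Fintype K]

lemma exists_closedWalk_excursion (hr : R.Reachable r a) (h : R.Adj a b) :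
    ∃ d ≤ Fintype.card K, ∀ t, ∃ w : R.Walk r r, w.length = 2 * d + 2 * t ∧
      ∀ v, w.support.tail.count v ≤ 2 * d + if v = a ∨ v = b then t else 0 := by
  obtain ⟨p, hp⟩ := hr.exists_isPath
  refine ⟨p.length, hp.length_lt.le, fun t => ?_⟩
  obtain ⟨w, hw, hcount⟩ := exists_closedWalk_oscillating h t
  refine ⟨(p.append w).append p.reverse, by simp [hw]; ring, fun v => ?_⟩
  rw [Walk.tail_support_append, Walk.tail_support_append, List.count_append, List.count_append]
  have hout : p.support.tail.count v ≤ p.length := List.count_le_length.trans (by simp)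
  have hback : p.reverse.support.tail.count v ≤ p.length := List.count_le_length.trans (by simp)
  have := hcount v
  omega

lemma exists_closedWalk_multiExcursion (T : ℕ) (D : Finset (K × K))
    (hD : ∀ d ∈ D, R.Reachable r d.1 ∧ R.Adj d.1 d.2) :
    ∃ E ≤ Fintype.card K * #D, ∀ τ ≤ #D * T, ∃ w : R.Walk r r, w.length = 2 * E + 2 * τ ∧
      ∀ v, w.support.tail.count v ≤ 2 * E + T * #{d ∈ D | v = d.1 ∨ v = d.2} := by
  induction D using Finset.induction_on with
  | empty => exact ⟨0, by simp, fun τ hτ => ⟨.nil, by simpa using hτ, by simp⟩⟩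
  | insert d D hd ih =>
    obtain ⟨E, hE, hwalk⟩ := ih fun d' hd' => hD d' (mem_insert_of_mem hd')
    obtain ⟨hreach, hadj⟩ := hD d (mem_insert_self d D)
    obtain ⟨E', hE', hexcursion⟩ := exists_closedWalk_excursion hreach hadj
    rw [card_insert_of_notMem hd]
    refine ⟨E + E', by rw [Nat.mul_succ]; omega, fun τ hτ => ?_⟩
    rw [Nat.succ_mul] at hτ
    obtain ⟨w, hwlen, hwcount⟩ := hwalk (τ - min τ T) (by omega)
    obtain ⟨x, hxlen, hxcount⟩ := hexcursion (min τ T)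
    refine ⟨w.append x, by rw [Walk.length_append, hwlen, hxlen]; omega, fun v => ?_⟩
    rw [Walk.tail_support_append, List.count_append, filter_insert]
    have hw := hwcount v
    have hx := hxcount v
    split_ifs at hx ⊢ with hv
    · rw [card_insert_of_notMem (by simp [hd]), Nat.mul_succ]
      omega
    · omega

lemma card_filter_eq_fst_or_eq_snd_le (D : Finset (K × K)) (v : K) :
    #{d ∈ D | v = d.1 ∨ v = d.2} ≤ 2 * Fintype.card K := by
  have hsub : ({d ∈ D | v = d.1 ∨ v = d.2} : Finset (K × K)) ⊆ {v} ×ˢ univ ∪ univ ×ˢ {v} := by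
    intro d
    simp only [mem_filter, mem_union, mem_product, mem_singleton, mem_univ, and_true, true_and]
    rintro ⟨-, rfl | rfl⟩ <;> simp
  have := (card_le_card hsub).trans (card_union_le _ _)
  simp only [card_product, card_singleton, card_univ] at this
  omega

lemma exists_closedWalk_count_le (hrp : R.Adj r p) {T M : ℕ} {D : Finset (K × K)}
    (hD : ∀ d ∈ D, R.Reachable r d.1 ∧ R.Adj d.1 d.2) (hM : M ≤ #D * T) :
    ∃ w : R.Walk r r, w.length = 2 * M ∧
      ∀ v, w.support.count v ≤ 1 + 2 * Fintype.card K ^ 3 + 2 * Fintype.card K * T := by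
  have count_le (w : R.Walk r r) (v : K) : w.support.count v ≤ 1 + w.support.tail.count v := by
    rw [← Walk.cons_tail_support, List.count_cons, List.tail_cons]
    split_ifs <;> omega
  obtain ⟨E, hE, hwalk⟩ := exists_closedWalk_multiExcursion T D hD
  have hE3 : E ≤ Fintype.card K ^ 3 := by
    have hD2 : #D ≤ Fintype.card K * Fintype.card K := by
      simpa [Fintype.card_prod] using card_le_univ D
    exact hE.trans ((Nat.mul_le_mul_left _ hD2).trans_eq (by ring))
  obtain hME | hEM := le_total M E
  · obtain ⟨w, hlen, hcount⟩ := exists_closedWalk_oscillating hrp M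
    refine ⟨w, hlen, fun v => (count_le w v).trans ?_⟩
    have hv : w.support.tail.count v ≤ M := (hcount v).trans (by split_ifs <;> omega)
    omega
  · obtain ⟨w, hlen, hcount⟩ := hwalk (M - E) (by omega)
    refine ⟨w, by omega, fun v => (count_le w v).trans ?_⟩
    have hT := Nat.mul_le_mul_left T (card_filter_eq_fst_or_eq_snd_le D v)
    have := hcount v
    linarith

end ReducedWalks

lemma IsClusterModel.hasCycleOfLength {V K : Type*} [Fintype K] {G : SimpleGraph V}
    [DecidableRel G.Adj] {R : SimpleGraph K} {cl : K → Finset V} {e κ γ : ℝ}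
    (h : IsClusterModel G R cl e κ) (he : 0 < e) (hκ : 3 * e ≤ κ) (hγ : e ≤ γ)
    (hκγ : e ≤ κ * γ) {s : ℕ} (hs : ∀ a, s ≤ #(cl a)) {r p q : K} (hrp : R.Adj r p)
    (hrq : R.Adj r q) (hpq : R.Adj p q) {D : Finset (K × K)}
    (hD : ∀ d ∈ D, R.Reachable r d.1 ∧ R.Adj d.1 d.2) {T : ℕ}
    (hT : (3 + 2 * Fintype.card K ^ 3 + 2 * Fintype.card K * T : ℝ) ≤ (1 - γ - 2 * e) * s)
    {l : ℕ} (hl : 4 ≤ l) (hl' : l ≤ 2 * (#D * T)) : HasCycleOfLength G l := by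
  classical
  have hγe : 0 < 1 - γ - 2 * e :=
    pos_of_mul_pos_left (lt_of_lt_of_le (by positivity) hT) (Nat.cast_nonneg s)
  have hcap (c : K) {m : ℕ}
      (hm : m ≤ 2 + 2 * Fintype.card K ^ 3 + 2 * Fintype.card K * T) :
      (m + 1 + 2 * (e * #(cl c)) : ℝ) ≤ (1 - γ) * #(cl c) := by
    have hm' : (m : ℝ) ≤ 2 + 2 * Fintype.card K ^ 3 + 2 * Fintype.card K * T := mod_cast hm
    have hsc : (s : ℝ) ≤ #(cl c) := mod_cast hs c
    linarith [mul_le_mul_of_nonneg_left hsc hγe.le]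
  obtain ⟨w, hlen, hcount⟩ := exists_closedWalk_count_le hrp hD (T := T) (M := l / 2 - 1)
    (by omega)
  obtain ⟨t, rfl | rfl⟩ := Nat.even_or_odd' l
  · rw [show 2 * t = w.length + 2 by omega]
    exact h.hasCycleOfLength_of_walk he (by linarith) hκ hγ hκγ w (by omega) hrp.symm hrp.symm
      fun c => hcap c ((hcount c).trans (by omega))
  · rw [show 2 * t + 1 = (w.concat hrq).length + 2 by rw [Walk.length_concat]; omega]
    refine h.hasCycleOfLength_of_walk he (by linarith) hκ hγ hκγ (w.concat hrq)
      (by simp) hrp.symm hpq fun c => hcap c ?_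
    rw [Walk.support_concat, List.count_append]
    have : [q].count c ≤ 1 := List.count_le_length
    linarith [hcount c]

section Regularity

variable {V : Type*} {G : SimpleGraph V} [DecidableRel G.Adj] {e δ : ℝ}

lemma isLowerRegular_of_isUniform (he : 0 < e) {A B : Finset V} (hA : A.Nonempty)
    (hB : B.Nonempty) (hu : G.IsUniform e A B) (hδ : δ ≤ G.edgeDensity A B) :
    IsLowerRegular G e (δ - e) A B := by
  intro A' hA' B' hB' hAcard hBcard
  have hApos : (0 : ℝ) < #A := mod_cast hA.card_pos
  have hBpos : (0 : ℝ) < #B := mod_cast hB.card_pos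
  have hA'pos : (0 : ℝ) < #A' := (mul_pos he hApos).trans_le hAcard
  have hB'pos : (0 : ℝ) < #B' := (mul_pos he hBpos).trans_le hBcard
  have hdensity := abs_lt.1 (hu hA' hB' (by linarith) (by linarith))
  have hcount : (G.edgeDensity A' B' : ℝ) * #B' * #A' = ∑ x ∈ A', (#{y ∈ B' | G.Adj x y} : ℝ) := by
    rw [edgeDensity_def, card_interedges_eq_sum_card]
    push_cast
    field_simp
  obtain ⟨x, hx, hdeg⟩ := exists_le_of_sum_le (card_pos.1 (Nat.cast_pos.1 hA'pos))
    (f := fun _ => (G.edgeDensity A' B' : ℝ) * #B') (g := fun x => (#{y ∈ B' | G.Adj x y} : ℝ))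
    (by rw [sum_const, nsmul_eq_mul, ← hcount, mul_comm])
  exact ⟨x, hx, le_trans (by gcongr; linarith) hdeg⟩

variable [Fintype V] [DecidableEq V] {P : Finpartition (univ : Finset V)}

/-- The reduced graph of the partition `P`, joining two distinct parts when they form an
`e`-uniform pair of density at least `δ`. Unlike `SimpleGraph.regularityReduced`, its vertices are
the parts of `P`. -/
def clusterGraph (G : SimpleGraph V) [DecidableRel G.Adj] (P : Finpartition (univ : Finset V))
    (e δ : ℝ) : SimpleGraph P.parts where
  Adj U W := U ≠ W ∧ G.IsUniform e (U : Finset V) W ∧ δ ≤ G.edgeDensity (U : Finset V) W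
  symm := ⟨fun _ _ h => ⟨h.1.symm, h.2.1.symm, by rw [edgeDensity_comm]; exact h.2.2⟩⟩
  loopless := ⟨fun _ h => h.1 rfl⟩

/-- The vertex of `clusterGraph` given by the part containing `v`. -/
def partOf (P : Finpartition (univ : Finset V)) (v : V) : P.parts :=
  ⟨P.part v, P.part_mem.2 (mem_univ v)⟩

lemma clusterGraph_adj_partOf {v w : V} (h : (G.regularityReduced P e δ).Adj v w) :
    (clusterGraph G P e δ).Adj (partOf P v) (partOf P w) := by
  obtain ⟨-, U, hU, W, hW, hv, hw, hne, hunif, hdens⟩ := h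
  obtain rfl := P.part_eq_of_mem hU hv
  obtain rfl := P.part_eq_of_mem hW hw
  exact ⟨fun h => hne (congrArg Subtype.val h), hunif, hdens⟩

lemma isClusterModel_clusterGraph (he : 0 < e) (hcard : ∀ U ∈ P.parts, 1 ≤ e * #U) :
    IsClusterModel G (clusterGraph G P e δ) (fun U => U) e (δ - e) where
  disjoint U W hUW := P.disjoint U.2 W.2 (fun h => hUW (Subtype.ext h))
  isLowerRegular U W h := isLowerRegular_of_isUniform he (P.nonempty_of_mem_parts U.2)
    (P.nonempty_of_mem_parts W.2) h.2.1 h.2.2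
  one_le U := hcard U U.2

lemma interedges_sdiff_regularityReduced_subset :
    (G \ G.regularityReduced P e δ).interedges univ univ ⊆
      (P.nonUniforms G e).biUnion (fun (U, W) => U ×ˢ W) ∪ P.parts.biUnion offDiag ∪
        (P.sparsePairs G δ).biUnion (fun (U, W) => G.interedges U W) := by
  rintro ⟨x, y⟩ hxy
  obtain ⟨hadj, hred⟩ := (sdiff_adj _ _ _ _).1 ((mem_interedges_iff _).1 hxy).2.2
  obtain ⟨U, hU, hx⟩ := P.exists_mem (mem_univ x)
  obtain ⟨W, hW, hy⟩ := P.exists_mem (mem_univ y)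
  simp only [mem_union, mem_biUnion, Prod.exists, mem_product, mem_offDiag,
    Finpartition.mk_mem_nonUniforms, Finpartition.mk_mem_sparsePairs, mem_interedges_iff]
  obtain rfl | hUW := eq_or_ne U W
  · exact .inl (.inr ⟨U, hU, hx, hy, hadj.ne⟩)
  by_cases hunif : G.IsUniform e U W
  · have hsparse : (G.edgeDensity U W : ℝ) < δ := not_le.1 fun hdens =>
      hred ⟨hadj, U, hU, W, hW, hx, hy, hUW, hunif, hdens⟩
    exact .inr ⟨U, W, ⟨hU, hW, hUW, hsparse⟩, hx, hy, hadj⟩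
  · exact .inl (.inl ⟨U, W, ⟨hU, hW, hUW, hunif⟩, hx, hy⟩)

lemma card_interedges_sdiff_regularityReduced_le [Nonempty V] (he : 0 < e) (heδ : e ≤ δ)
    (hP : P.IsEquipartition) (hPu : P.IsUniform G e) (hparts : 4 / δ ≤ #P.parts) :
    (#((G \ G.regularityReduced P e δ).interedges univ univ) : ℝ) ≤
      9 * δ * (Fintype.card V : ℝ) ^ 2 := by
  have hδ : 0 < δ := he.trans_le heδ
  have hnonUniform := hP.sum_nonUniforms_lt univ_nonempty he hPu
  have hinside := hP.card_biUnion_offDiag_le hδ hparts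
  have hsparse := hP.card_interedges_sparsePairs_le (G := G) hδ.le
  have hunion := (card_le_card
    (interedges_sdiff_regularityReduced_subset (G := G) (P := P) (e := e) (δ := δ))).trans
    ((card_union_le _ _).trans (Nat.add_le_add_right (card_union_le _ _) _))
  rw [← Nat.cast_le (α := ℝ)] at hunion
  push_cast at hunion
  rw [card_univ] at hnonUniform hinside hsparse
  have : 4 * e * (Fintype.card V : ℝ) ^ 2 ≤ 4 * δ * (Fintype.card V : ℝ) ^ 2 := by gcongr
  linarith [show 0 ≤ δ / 2 * (Fintype.card V : ℝ) ^ 2 by positivity]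

open scoped Classical in
lemma sum_degree_regularityReduced_le (hP : P.IsEquipartition) (r : P.parts) :
    ∑ v with (clusterGraph G P e δ).Reachable r (partOf P v), (G.regularityReduced P e δ).degree v ≤
      #{d : P.parts × P.parts |
        (clusterGraph G P e δ).Reachable r d.1 ∧ (clusterGraph G P e δ).Adj d.1 d.2} *
        (Fintype.card V / #P.parts + 1) ^ 2 := by
  simp_rw [← card_neighborFinset_eq_degree, ← card_sigma]
  let block (d : P.parts × P.parts) : Finset (Σ _ : V, V) := d.1.1.sigma fun _ => d.2.1
  refine (card_le_card (t := Finset.biUnion _ block) ?_).trans (card_biUnion_le_card_mul _ _ _ ?_)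
  · rintro ⟨v, w⟩ hvw
    simp only [mem_sigma, mem_filter, mem_univ, true_and, mem_neighborFinset] at hvw
    refine mem_biUnion.2 ⟨(partOf P v, partOf P w), ?_, ?_⟩
    · simpa using ⟨hvw.1, clusterGraph_adj_partOf hvw.2⟩
    · exact mem_sigma.2 ⟨P.mem_part (mem_univ v), P.mem_part (mem_univ w)⟩
  · intro d _
    rw [card_sigma, sum_const, smul_eq_mul, sq]
    exact Nat.mul_le_mul (hP.card_part_le_average_add_one d.1.2)
      (hP.card_part_le_average_add_one d.2.2)

end Regularity

section Parameters

variable {k s n q T : ℕ} {e γ η : ℝ}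

lemma exists_multiplicity (hk : 0 < k) (heγ : e ≤ γ) (hγ : γ ≤ 1 / 4)
    (hs : (3 + 2 * k ^ 3 + 2 * k : ℝ) ≤ e * s) :
    ∃ T : ℕ, (3 + 2 * k ^ 3 + 2 * k * T : ℝ) ≤ (1 - γ - 2 * e) * s ∧
      (1 - 4 * γ) * s ≤ 2 * k * T := by
  have hk' : (0 : ℝ) < 2 * k := by positivity
  have heγs : e * s ≤ γ * s := by gcongr
  have hγs : γ * s ≤ 1 / 4 * s := by gcongr
  set X : ℝ := (1 - γ - 2 * e) * s - 3 - 2 * k ^ 3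
  have hfloor : 2 * k * (⌊X / (2 * k)⌋₊ : ℝ) ≤ X := by
    rw [mul_comm, ← le_div_iff₀ hk']
    exact Nat.floor_le (div_nonneg (by linarith) hk'.le)
  have hfloor' : X ≤ (⌊X / (2 * k)⌋₊ + 1) * (2 * k) :=
    (div_le_iff₀ hk').1 (Nat.lt_floor_add_one _).le
  exact ⟨⌊X / (2 * k)⌋₊, by linarith, by linarith⟩

lemma quarter_sub_mul_le_of_multiplicity (hη0 : 0 < η) (hη : η ≤ 1 / 16) (hs : 1 ≤ η * s)
    (hks : k * s ≤ n) (hT : (1 - 4 * η) * s ≤ 2 * k * T)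
    (hq : (1 / 4 - 4 * η) * (n : ℝ) ^ 2 ≤ q * ((s : ℝ) + 1) ^ 2) :
    (1 / 4 - 11 / 2 * η) * n ≤ 2 * (q * T) := by
  have hks' : (k * s : ℝ) ≤ n := mod_cast hks
  have hs1 : ((s : ℝ) + 1) ^ 2 ≤ ((1 + η) * s) ^ 2 := by gcongr; linarith
  have hcube : (1 - 2 * η) * (1 + η) ^ 2 ≤ 1 := by nlinarith [pow_pos hη0 3, sq_nonneg η]
  have hqs : (1 - 2 * η) * (1 / 4 - 4 * η) * (n : ℝ) ^ 2 ≤ q * (s : ℝ) ^ 2 := by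
    calc (1 - 2 * η) * (1 / 4 - 4 * η) * (n : ℝ) ^ 2
        = (1 - 2 * η) * ((1 / 4 - 4 * η) * (n : ℝ) ^ 2) := by ring
      _ ≤ (1 - 2 * η) * (q * ((1 + η) * s) ^ 2) := by
          have : 0 ≤ 1 - 2 * η := by linarith
          exact mul_le_mul_of_nonneg_left (hq.trans (by gcongr)) this
      _ = ((1 - 2 * η) * (1 + η) ^ 2) * (q * (s : ℝ) ^ 2) := by ring
      _ ≤ q * (s : ℝ) ^ 2 := mul_le_of_le_one_left (by positivity) hcube
  have hcoef : 1 / 4 - 11 / 2 * η ≤ (1 - 4 * η) * ((1 - 2 * η) * (1 / 4 - 4 * η)) := by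
    nlinarith [mul_nonneg (sq_nonneg η) (sub_nonneg.2 hη)]
  obtain rfl | hn := n.eq_zero_or_pos
  · simp only [Nat.cast_zero, mul_zero]
    positivity
  refine le_of_mul_le_mul_right (a := (n : ℝ)) ?_ (mod_cast hn)
  calc (1 / 4 - 11 / 2 * η) * n * n
      = (1 / 4 - 11 / 2 * η) * (n : ℝ) ^ 2 := by ring
    _ ≤ (1 - 4 * η) * ((1 - 2 * η) * (1 / 4 - 4 * η)) * (n : ℝ) ^ 2 := by gcongr
    _ = (1 - 4 * η) * ((1 - 2 * η) * (1 / 4 - 4 * η) * (n : ℝ) ^ 2) := by ring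
    _ ≤ (1 - 4 * η) * (q * (s : ℝ) ^ 2) := by
        have : 0 ≤ 1 - 4 * η := by linarith
        gcongr
    _ = (1 - 4 * η) * s * (q * s) := by ring
    _ ≤ 2 * k * T * (q * s) := by gcongr
    _ = 2 * (q * T) * (k * s) := by ring
    _ ≤ 2 * (q * T) * n := by gcongr

end Parameters

section Assembly

variable {V : Type*} [Fintype V] [DecidableEq V] {G G' : SimpleGraph V} [DecidableRel G.Adj]
  [DecidableRel G'.Adj] {P : Finpartition (univ : Finset V)} {u : V} {l : ℕ} {e δ η : ℝ}

lemma sum_degree_neighborFinset_le_card_interedges (hle : G' ≤ G)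
    (hu : ∀ v w, G'.Adj u v → G'.Adj u w → ¬ G'.Adj v w) :
    ∑ v ∈ G'.neighborFinset u, G'.degree v ≤
      #(G.interedges (G'.neighborFinset u) (G'.neighborFinset u)ᶜ) := by
  rw [card_interedges_eq_sum_card]
  refine sum_le_sum fun v hv => card_le_card fun w hw => ?_
  rw [mem_neighborFinset] at hv hw
  simpa using ⟨fun huw => hu v w hv huw hw, hle hw⟩

lemma quarter_sub_mul_sq_le_specRad_regularityReduced_sq
    (hρ : √((Fintype.card V ^ 2 / 4 : ℕ) : ℝ) < specRad G) (hn : 100 ≤ Fintype.card V)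
    (hη0 : 0 < η) (hη : η ≤ 1 / 8) (hηn : 1 ≤ η * Fintype.card V) (he : 0 < e) (heη : e ≤ η ^ 2)
    (hP : P.IsEquipartition) (hPu : P.IsUniform G e) (hparts : 4 / η ^ 2 ≤ #P.parts) :
    (1 / 4 - 4 * η) * (Fintype.card V : ℝ) ^ 2 ≤
      specRad (G.regularityReduced P e (η ^ 2)) ^ 2 := by
  have : Nonempty V := Fintype.card_pos_iff.1 (by omega)
  have hdeleted : √(#((G \ G.regularityReduced P e (η ^ 2)).interedges univ univ) : ℝ) ≤
      3 * η * Fintype.card V := by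
    refine Real.sqrt_le_left (by positivity) |>.2 ?_
    exact (card_interedges_sdiff_regularityReduced_le he heη hP hPu hparts).trans_eq (by ring)
  have hspec := specRad_le_add_sqrt_card_interedges_sdiff
    (regularityReduced_le (G := G) (P := P) (ε := e) (δ := η ^ 2))
  have hhalf := half_sub_le_sqrt_sq_div_four hn
  have hlower : (1 / 2 - 4 * η) * Fintype.card V ≤ specRad (G.regularityReduced P e (η ^ 2)) := by
    linarith
  have hη' : 0 ≤ 1 / 2 - 4 * η := by linarith
  calc (1 / 4 - 4 * η) * (Fintype.card V : ℝ) ^ 2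
      ≤ (1 / 2 - 4 * η) ^ 2 * (Fintype.card V : ℝ) ^ 2 := by gcongr; nlinarith
    _ = ((1 / 2 - 4 * η) * Fintype.card V) ^ 2 := by ring
    _ ≤ specRad (G.regularityReduced P e (η ^ 2)) ^ 2 := by gcongr

open scoped Classical in
lemma hasCycleOfLength_of_regularityReduced_triangle (hη0 : 0 < η) (hη : η ≤ 1 / 16)
    (he : 0 < e) (heη : e ≤ η) (heδ : 4 * e ≤ δ) (heδη : e ≤ (δ - e) * η) (hP : P.IsEquipartition)
    (hsize : (3 + 2 * #P.parts ^ 3 + 2 * #P.parts : ℝ) ≤ e * (Fintype.card V / #P.parts : ℕ))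
    {v w : V} (huv : (G.regularityReduced P e δ).Adj u v)
    (huw : (G.regularityReduced P e δ).Adj u w) (hvw : (G.regularityReduced P e δ).Adj v w)
    (hcomp : (1 / 4 - 4 * η) * (Fintype.card V : ℝ) ^ 2 ≤
      ∑ x with (clusterGraph G P e δ).Reachable (partOf P u) (partOf P x),
        ((G.regularityReduced P e δ).degree x : ℝ))
    (hl : 4 ≤ l) (hl' : (l : ℝ) ≤ (1 / 4 - 11 / 2 * η) * Fintype.card V) :
    HasCycleOfLength G l := by
  have hk : 0 < #P.parts := card_pos.2 ⟨_, (partOf P u).2⟩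
  have hs (U : P.parts) : Fintype.card V / #P.parts ≤ #(U : Finset V) :=
    hP.average_le_card_part U.2
  have hone : 1 ≤ e * (Fintype.card V / #P.parts : ℕ) := le_trans (by
    linarith [show (0 : ℝ) ≤ 2 * #P.parts ^ 3 + 2 * #P.parts by positivity]) hsize
  have hmodel : IsClusterModel G (clusterGraph G P e δ) (fun U => U) e (δ - e) :=
    isClusterModel_clusterGraph he fun U hU => hone.trans (by gcongr; exact hs ⟨U, hU⟩)
  obtain ⟨T, hT, hT'⟩ := exists_multiplicity hk heη (by linarith) hsize
  set D : Finset (P.parts × P.parts) :=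
    {d | (clusterGraph G P e δ).Reachable (partOf P u) d.1 ∧ (clusterGraph G P e δ).Adj d.1 d.2}
  have hdarts : (1 / 4 - 4 * η) * (Fintype.card V : ℝ) ^ 2 ≤
      #D * ((Fintype.card V / #P.parts : ℕ) + 1) ^ 2 :=
    hcomp.trans (mod_cast sum_degree_regularityReduced_le hP (partOf P u))
  refine hmodel.hasCycleOfLength (γ := η) he (by linarith) heη heδη hs
    (clusterGraph_adj_partOf huv) (clusterGraph_adj_partOf huw) (clusterGraph_adj_partOf hvw)
    (D := D) (fun d hd => (mem_filter.1 hd).2) (by simpa only [Fintype.card_coe] using hT) hl ?_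
  exact_mod_cast hl'.trans (quarter_sub_mul_le_of_multiplicity hη0 hη
    (hone.trans (by gcongr)) (Nat.mul_div_le _ _) hT' hdarts)

lemma hasCycleOfLength_of_isUniform (hρ : √((Fintype.card V ^ 2 / 4 : ℕ) : ℝ) < specRad G)
    (hη0 : 0 < η) (hη : η ≤ 1 / 4000000) (he : 0 < e) (heη : 4 * e ≤ η ^ 2)
    (heη' : e ≤ (η ^ 2 - e) * η) (hP : P.IsEquipartition) (hPu : P.IsUniform G e)
    (hparts : 4 / η ^ 2 ≤ #P.parts)
    (hsize : (3 + 2 * #P.parts ^ 3 + 2 * #P.parts : ℝ) ≤ e * (Fintype.card V / #P.parts : ℕ))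
    (hl : 4 ≤ l) (hl' : (l : ℝ) ≤ (1 / 4 - 11 / 2 * η) * Fintype.card V) :
    HasCycleOfLength G l := by
  classical
  have heη1 : e ≤ η := by nlinarith
  have hηn : 3 ≤ η * Fintype.card V := by
    calc (3 : ℝ) ≤ 3 + 2 * #P.parts ^ 3 + 2 * #P.parts := by
          linarith [show (0 : ℝ) ≤ 2 * #P.parts ^ 3 + 2 * #P.parts by positivity]
      _ ≤ e * (Fintype.card V / #P.parts : ℕ) := hsize
      _ ≤ η * Fintype.card V := by gcongr; exact Nat.div_le_self _ _
  have hn : 1000 ≤ Fintype.card V := by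
    have : (1000 : ℝ) ≤ Fintype.card V := by nlinarith
    exact_mod_cast this
  have : Nonempty V := Fintype.card_pos_iff.1 (by omega)
  have hρ' := quarter_sub_mul_sq_le_specRad_regularityReduced_sq hρ (by omega) hη0 (by linarith)
    (by linarith) he (by linarith) hP hPu hparts
  obtain ⟨u, hnbhd, hclosed⟩ := exists_dominant_vertex (G.regularityReduced P e (η ^ 2))
  by_cases htriangle : ∃ v w, (G.regularityReduced P e (η ^ 2)).Adj u v ∧
      (G.regularityReduced P e (η ^ 2)).Adj u w ∧ (G.regularityReduced P e (η ^ 2)).Adj v w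
  · obtain ⟨v, w, huv, huw, hvw⟩ := htriangle
    refine hasCycleOfLength_of_regularityReduced_triangle hη0 (by linarith) he heη1 heη heη' hP
      hsize huv huw hvw (hρ'.trans (hclosed _ (by simp) fun x hx y hxy => ?_)) hl hl'
    rw [mem_neighborFinset] at hxy
    simp only [mem_filter, mem_univ, true_and] at hx ⊢
    exact hx.trans (clusterGraph_adj_partOf hxy).reachable
  · push Not at htriangle
    have hcut : (∑ v ∈ (G.regularityReduced P e (η ^ 2)).neighborFinset u,
        ((G.regularityReduced P e (η ^ 2)).degree v : ℝ)) ≤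
          #(G.interedges ((G.regularityReduced P e (η ^ 2)).neighborFinset u)
            ((G.regularityReduced P e (η ^ 2)).neighborFinset u)ᶜ) :=
      mod_cast sum_degree_neighborFinset_le_card_interedges regularityReduced_le htriangle
    refine hasCycleOfLength_of_large_cut hn hρ (le_trans ?_ (hρ'.trans (hnbhd.trans hcut))) hl ?_
    · nlinarith
    · have : (4 * l : ℝ) ≤ Fintype.card V := by linarith
      exact_mod_cast this

end Assembly

lemma exists_isUniform_equipartition_le_card_div {e : ℝ} (he : 0 < e) (m : ℕ) (f : ℕ → ℕ) :
    ∃ N : ℕ, ∀ {V : Type*} [Fintype V] [DecidableEq V] (G : SimpleGraph V) [DecidableRel G.Adj],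
      N ≤ Fintype.card V → ∃ P : Finpartition (univ : Finset V), P.IsEquipartition ∧
        P.IsUniform G e ∧ m ≤ #P.parts ∧ f #P.parts ≤ Fintype.card V / #P.parts := by
  set M := SzemerediRegularity.bound e (m + 1)
  set F := (range (M + 1)).sup f
  refine ⟨F * M + (m + 1), fun G _ hN => ?_⟩
  obtain ⟨P, hP, hm, hM, hPu⟩ := szemeredi_regularity G he (l := m + 1) (by omega)
  refine ⟨P, hP, hPu, by omega, (Nat.le_div_iff_mul_le (by omega)).2 ?_⟩
  have hf : f #P.parts ≤ F := le_sup (mem_range.2 (by omega))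
  exact (Nat.mul_le_mul hf hM).trans ((Nat.le_add_right _ _).trans hN)

/-- Li–Ning: for `0 < ε < 1/4` there is `N(ε)` such that every graph on `n ≥ N` vertices
with `ρ(G) > √⌊n²/4⌋` contains every cycle `C_l` with `3 ≤ l ≤ (1/4 − ε)n`. -/
theorem stmt12 (ε : ℝ) (hε0 : 0 < ε) (hε : ε < 1 / 4) :
    ∃ N : ℕ, ∀ n : ℕ, N ≤ n → ∀ G : SimpleGraph (Fin n),
      Real.sqrt ((n ^ 2 / 4 : ℕ) : ℝ) < specRad G →
      ∀ l : ℕ, 3 ≤ l → (l : ℝ) ≤ (1 / 4 - ε) * n →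
        ∃ (v : Fin n) (c : G.Walk v v), c.IsCycle ∧ c.length = l := by
  classical
  set η : ℝ := ε / 4000000 with hη
  have hη0 : 0 < η := by positivity
  have he : 0 < η ^ 3 / 4 := by positivity
  obtain ⟨N, hN⟩ := exists_isUniform_equipartition_le_card_div he ⌈4 / η ^ 2⌉₊
    fun k => ⌈(3 + 2 * k ^ 3 + 2 * k : ℝ) / (η ^ 3 / 4)⌉₊
  refine ⟨N + 1, fun n hn G hρ l hl hl' => ?_⟩
  have : NeZero n := ⟨by omega⟩
  have hρ' : √((Fintype.card (Fin n) ^ 2 / 4 : ℕ) : ℝ) < specRad G := by rwa [Fintype.card_fin]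
  obtain rfl | hl4 := hl.eq_or_lt
  · obtain ⟨u, v, w, huv, huw, hvw⟩ := exists_triangle_of_sqrt_lt_specRad hρ'
    exact hasCycleOfLength_three huv huw hvw
  obtain ⟨P, hP, hPu, hparts, hsize⟩ := hN G (by rw [Fintype.card_fin]; omega)
  refine hasCycleOfLength_of_isUniform hρ' hη0 (by linarith) he (by nlinarith [sq_nonneg η])
    (by nlinarith [pow_pos hη0 3]) hP hPu (Nat.le_of_ceil_le hparts)
    ((div_le_iff₀' he).1 (Nat.le_of_ceil_le hsize)) hl4 (hl'.trans ?_)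
  rw [Fintype.card_fin]
  gcongr
  linarith
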